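/- Let γ > 1 and 0 < α < 1. For every measurable set R ⊆ (0,1) that is symmetric (for all x ∈ (0,1), x ∈ R if and only if 1 − x ∈ R) and has Lebesgue measure α, the power of R against f₁ is at most the power of the extreme-tails region: ∫_R (1+γ)x^γ dx ≤ ∫_{E_α} (1+γ)x^γ dx. (For convex alternatives the extreme-tails test is the most powerful symmetric size-α test, and there the MLR and ALR tests coincide.) -/

import Mathlib

/-!
A symmetric region cannot tell `f` from its average `g` with the mirror image of `f`. Since `g` is
convex and symmetric, it increases with the distance from the centre, so the extreme tails form a
superlevel set of `g`, and the Neyman–Pearson argument applies to `g`.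
-/

open MeasureTheory Set

theorem setIntegral_le_setIntegral_of_threshold {X : Type*} [MeasurableSpace X] {μ : Measure X}
    {R E : Set X} {f : X → ℝ} {k : ℝ} (hR : MeasurableSet R) (hE : MeasurableSet E)
    (hfR : IntegrableOn f R μ) (hfE : IntegrableOn f E μ) (hμE : μ E ≠ ⊤) (hμ : μ R = μ E)
    (hin : ∀ x ∈ E \ R, k ≤ f x) (hout : ∀ x ∈ R \ E, f x ≤ k) :
    ∫ x in R, f x ∂μ ≤ ∫ x in E, f x ∂μ := by
  have hμR : μ R ≠ ⊤ := hμ ▸ hμE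
  have hμ_sdiff : μ.real (R \ E) = μ.real (E \ R) := by
    have h₁ := measureReal_inter_add_sdiff (s := R) hE
    have h₂ := measureReal_inter_add_sdiff (s := E) hR
    rw [measureReal_def μ R, hμ, ← measureReal_def, inter_comm] at h₁
    linarith
  have hle : ∫ x in R \ E, f x ∂μ ≤ ∫ x in E \ R, f x ∂μ :=
    calc ∫ x in R \ E, f x ∂μ
        ≤ ∫ _ in R \ E, k ∂μ := setIntegral_mono_on (hfR.mono_set sdiff_subset)
          (integrableOn_const (measure_ne_top_of_subset sdiff_subset hμR)) (hR.diff hE) hout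
      _ = ∫ _ in E \ R, k ∂μ := by rw [setIntegral_const, setIntegral_const, hμ_sdiff]
      _ ≤ ∫ x in E \ R, f x ∂μ := setIntegral_mono_on
          (integrableOn_const (measure_ne_top_of_subset sdiff_subset hμE))
          (hfE.mono_set sdiff_subset) (hE.diff hR) hin
  rw [← integral_inter_add_sdiff hE hfR, ← integral_inter_add_sdiff hR hfE, inter_comm]
  gcongr

section Reflection

variable {G : Type*} [AddCommGroup G] {c : G} {f : G → ℝ} {S : Set G}

theorem preimage_const_sub_eq_self (hS : ∀ x ∈ S, c - x ∈ S) : (c - ·) ⁻¹' S = S :=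
  Subset.antisymm (fun x hx ↦ sub_sub_cancel c x ▸ hS _ hx) hS

variable [MeasurableSpace G] [MeasurableAdd G] [MeasurableNeg G] {μ : Measure G}
  [μ.IsAddLeftInvariant] [μ.IsNegInvariant]

theorem integrableOn_comp_const_sub (hS : ∀ x ∈ S, c - x ∈ S) (hf : IntegrableOn f S μ) :
    IntegrableOn (fun x ↦ f (c - x)) S μ := by
  have h := ((Measure.measurePreserving_sub_left μ c).integrableOn_comp_preimage
    (MeasurableEquiv.subLeft c).measurableEmbedding).2 hf
  rwa [preimage_const_sub_eq_self hS] at h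

theorem setIntegral_comp_const_sub (hS : ∀ x ∈ S, c - x ∈ S) :
    ∫ x in S, f (c - x) ∂μ = ∫ x in S, f x ∂μ := by
  have h := (Measure.measurePreserving_sub_left μ c).setIntegral_preimage_emb
    (MeasurableEquiv.subLeft c).measurableEmbedding f S
  rwa [preimage_const_sub_eq_self hS] at h

end Reflection

/-- The average of `f` and its mirror image under the reflection `x ↦ c - x`. On an interval with
endpoints `a` and `b`, the reflection about the midpoint is the one with `c = a + b`. -/
noncomputable def symmetrization {G : Type*} [AddGroup G] (c : G) (f : G → ℝ) (x : G) : ℝ :=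
  (f x + f (c - x)) / 2

namespace symmetrization

theorem apply_const_sub {G : Type*} [AddCommGroup G] (c : G) (f : G → ℝ) (x : G) :
    symmetrization c f (c - x) = symmetrization c f x := by
  simp only [symmetrization, sub_sub_cancel, add_comm]

section Integral

variable {G : Type*} [AddCommGroup G] [MeasurableSpace G] [MeasurableAdd G] [MeasurableNeg G]
  {μ : Measure G} [μ.IsAddLeftInvariant] [μ.IsNegInvariant] {c : G} {f : G → ℝ} {S : Set G}

theorem integrableOn (hS : ∀ x ∈ S, c - x ∈ S) (hf : IntegrableOn f S μ) :
    IntegrableOn (symmetrization c f) S μ :=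
  (Integrable.add hf (integrableOn_comp_const_sub hS hf)).div_const 2

theorem setIntegral_eq (hS : ∀ x ∈ S, c - x ∈ S) (hf : IntegrableOn f S μ) :
    ∫ x in S, symmetrization c f x ∂μ = ∫ x in S, f x ∂μ := by
  simp only [symmetrization]
  rw [integral_div, integral_add hf (integrableOn_comp_const_sub hS hf),
    setIntegral_comp_const_sub hS, add_self_div_two]

end Integral

section Convex

variable {V : Type*} [AddCommGroup V] [Module ℝ V] {c x z : V} {f : V → ℝ} {s : Set V}

theorem convexOn (hs : ∀ x ∈ s, c - x ∈ s) (hf : ConvexOn ℝ s f) :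
    ConvexOn ℝ s (symmetrization c f) := by
  have hreflect : ConvexOn ℝ s fun x ↦ f (c - x) := by
    have h := hf.comp_affineMap (AffineMap.const ℝ V c - AffineMap.id ℝ V)
    rwa [show ⇑(AffineMap.const ℝ V c - AffineMap.id ℝ V) = (c - ·) from rfl,
      preimage_const_sub_eq_self hs] at h
  refine ((hf.add hreflect).smul (c := 2⁻¹) (by norm_num)).congr fun x _ ↦ ?_
  simp only [symmetrization, Pi.add_apply, smul_eq_mul]
  ring

theorem le_of_mem_segment (hs : ∀ x ∈ s, c - x ∈ s) (hf : ConvexOn ℝ s f) (hx : x ∈ s)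
    (hz : z ∈ segment ℝ x (c - x)) : symmetrization c f z ≤ symmetrization c f x := by
  simpa only [apply_const_sub, max_self] using
    (convexOn hs hf).le_max_of_mem_segment hx (hs x hx) hz

end Convex

end symmetrization

/-- The points of the interval `(a, b)` at distance less than `t` from one of its endpoints, for
`t ≤ b - a`. The rejection region `E_α` is `extremeTails 0 1 (α / 2)`. -/
def extremeTails (a b t : ℝ) : Set ℝ :=
  Ioo a (a + t) ∪ Ioo (b - t) b

namespace extremeTails

variable {a b t x : ℝ}

theorem measurableSet (a b t : ℝ) : MeasurableSet (extremeTails a b t) :=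
  measurableSet_Ioo.union measurableSet_Ioo

theorem subset_Ioo (ht : t ≤ b - a) : extremeTails a b t ⊆ Ioo a b :=
  union_subset (Ioo_subset_Ioo_right (by linarith)) (Ioo_subset_Ioo_left (by linarith))

theorem add_sub_mem (hx : x ∈ extremeTails a b t) : a + b - x ∈ extremeTails a b t := by
  rcases hx with ⟨hax, hxt⟩ | ⟨htx, hxb⟩
  · exact Or.inr ⟨by linarith, by linarith⟩
  · exact Or.inl ⟨by linarith, by linarith⟩

theorem volume_eq (ht : 2 * t ≤ b - a) :
    volume (extremeTails a b t) = ENNReal.ofReal (2 * t) := by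
  have hdisj : Disjoint (Ioo a (a + t)) (Ioo (b - t) b) :=
    Set.disjoint_left.2 fun x hl hr ↦ by linarith [hl.2, hr.1]
  rw [extremeTails, measure_union hdisj measurableSet_Ioo, Real.volume_Ioo, Real.volume_Ioo,
    add_sub_cancel_left, sub_sub_cancel, ← two_mul, ENNReal.ofReal_mul zero_le_two,
    ENNReal.ofReal_ofNat]

theorem add_mem_segment (ht : 2 * t ≤ b - a) (hx : x ∈ extremeTails a b t) :
    a + t ∈ segment ℝ x (a + b - x) := by
  rw [segment_eq_uIcc, mem_uIcc]
  rcases hx with ⟨-, hxt⟩ | ⟨htx, -⟩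
  · exact Or.inl ⟨by linarith, by linarith⟩
  · exact Or.inr ⟨by linarith, by linarith⟩

theorem mem_segment_of_notMem (hx : x ∈ Ioo a b) (hxE : x ∉ extremeTails a b t) :
    x ∈ segment ℝ (a + t) (a + b - (a + t)) := by
  have hleft : a + t ≤ x := not_lt.1 fun h ↦ hxE (Or.inl ⟨hx.1, h⟩)
  have hright : x ≤ b - t := not_lt.1 fun h ↦ hxE (Or.inr ⟨h, hx.2⟩)
  rw [segment_eq_uIcc, mem_uIcc]
  exact Or.inl ⟨hleft, by linarith⟩

end extremeTails

theorem add_sub_mem_Ioo {a b x : ℝ} (hx : x ∈ Ioo a b) : a + b - x ∈ Ioo a b :=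
  ⟨by linarith [hx.2], by linarith [hx.1]⟩

theorem le_sub_of_subset_Ioo_of_volume_eq {a b α : ℝ} {R : Set ℝ} (hα : 0 < α)
    (hRsub : R ⊆ Ioo a b) (hRvol : volume R = ENNReal.ofReal α) : α ≤ b - a := by
  have h : ENNReal.ofReal α ≤ ENNReal.ofReal (b - a) := by
    simpa only [hRvol, Real.volume_Ioo] using measure_mono (μ := volume) hRsub
  exact (ENNReal.ofReal_le_ofReal_iff'.1 h).resolve_right hα.not_ge

theorem extreme_tails_most_powerful_convex_general {a b α : ℝ} {f : ℝ → ℝ} {R : Set ℝ}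
    (hf : ConvexOn ℝ (Ioo a b) f) (hfint : IntegrableOn f (Ioo a b)) (hα : 0 < α)
    (hRmeas : MeasurableSet R) (hRsub : R ⊆ Ioo a b) (hRsym : ∀ x ∈ R, a + b - x ∈ R)
    (hRvol : volume R = ENNReal.ofReal α) :
    ∫ x in R, f x ≤ ∫ x in extremeTails a b (α / 2), f x := by
  have hαab : α ≤ b - a := le_sub_of_subset_Ioo_of_volume_eq hα hRsub hRvol
  have htails : 2 * (α / 2) ≤ b - a := by linarith
  have hEsub : extremeTails a b (α / 2) ⊆ Ioo a b := extremeTails.subset_Ioo (by linarith)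
  have hEvol : volume (extremeTails a b (α / 2)) = ENNReal.ofReal α := by
    rw [extremeTails.volume_eq htails, mul_div_cancel₀ α two_ne_zero]
  have hEsym : ∀ x ∈ extremeTails a b (α / 2), a + b - x ∈ extremeTails a b (α / 2) :=
    fun _ ↦ extremeTails.add_sub_mem
  have hfR := hfint.mono_set hRsub
  have hfE := hfint.mono_set hEsub
  have hle {x z : ℝ} (hx : x ∈ Ioo a b) (hz : z ∈ segment ℝ x (a + b - x)) :
      symmetrization (a + b) f z ≤ symmetrization (a + b) f x :=
    symmetrization.le_of_mem_segment (fun _ ↦ add_sub_mem_Ioo) hf hx hz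
  rw [← symmetrization.setIntegral_eq hRsym hfR, ← symmetrization.setIntegral_eq hEsym hfE]
  exact setIntegral_le_setIntegral_of_threshold (k := symmetrization (a + b) f (a + α / 2))
    hRmeas (extremeTails.measurableSet a b (α / 2)) (symmetrization.integrableOn hRsym hfR)
    (symmetrization.integrableOn hEsym hfE) (hEvol ▸ ENNReal.ofReal_ne_top) (hRvol.trans hEvol.symm)
    (fun x hx ↦ hle (hEsub hx.1) (extremeTails.add_mem_segment htails hx.1))
    (fun x hx ↦ hle ⟨by linarith, by linarith⟩
      (extremeTails.mem_segment_of_notMem (hRsub hx.1) hx.2))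

theorem convexOn_const_mul_rpow {γ k : ℝ} (hγ : 1 ≤ γ) (hk : 0 ≤ k) :
    ConvexOn ℝ (Ici 0) fun x : ℝ ↦ k * x ^ γ :=
  (convexOn_rpow hγ).smul hk

theorem integrableOn_Ioo_const_mul_rpow {γ b : ℝ} (hγ : -1 < γ) (k : ℝ) (hb : 0 ≤ b) :
    IntegrableOn (fun x : ℝ ↦ k * x ^ γ) (Ioo 0 b) :=
  ((intervalIntegrable_iff_integrableOn_Ioo_of_le hb).1
    (intervalIntegral.intervalIntegrable_rpow' hγ)).const_mul k

theorem extreme_tails_most_powerful_convex (γ α : ℝ) (hγ : 1 < γ)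
    (hα0 : 0 < α) (hα1 : α < 1) (R : Set ℝ)
    (hRmeas : MeasurableSet R) (hRsub : R ⊆ Ioo 0 1)
    (hRsym : ∀ x ∈ Ioo (0:ℝ) 1, x ∈ R ↔ 1 - x ∈ R)
    (hRvol : volume R = ENNReal.ofReal α) :
    ∫ x in R, (1+γ) * x ^ γ ∂volume ≤
      ∫ x in Ioo (0:ℝ) (α/2) ∪ Ioo (1 - α/2) 1, (1+γ) * x ^ γ ∂volume := by
  have hconv : ConvexOn ℝ (Ioo 0 1) fun x : ℝ ↦ (1 + γ) * x ^ γ :=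
    (convexOn_const_mul_rpow hγ.le (by linarith)).subset
      (fun _ hx ↦ hx.1.le) (convex_Ioo 0 1)
  simpa only [extremeTails, zero_add] using extreme_tails_most_powerful_convex_general hconv
    (integrableOn_Ioo_const_mul_rpow (by linarith) (1 + γ) zero_le_one) hα0 hRmeas hRsub
    (fun x hx ↦ by simpa only [zero_add] using (hRsym x (hRsub hx)).1 hx) hRvol
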